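/- arXiv:2305.03549 — 2 statements merged into one kernel-verified Lean document; each statement's English description precedes it below -/
import Mathlib

section
/- The variance of A_∞ with respect to (r,θ) uniform on [-1/√2,1/√2] × [0,2π) equals c₀ = 1/4 - (1/(2π√2))(4/15 + 2 log(1+√2)/3 + 2√2/15). -/
open Real MeasureTheory

/-- The unit square tilted by angle `θ` and centered at `(r, 0)`. -/
noncomputable def tiltedSquare (r θ : ℝ) : Set (ℝ × ℝ) :=
  {p | ∃ x y : ℝ, |x| ≤ 1/2 ∧ |y| ≤ 1/2 ∧
    p = (r + x * Real.cos θ - y * Real.sin θ, x * Real.sin θ + y * Real.cos θ)}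

/-- The area of the portion of the tilted shifted unit square lying in the left half-plane. -/
noncomputable def Ainf (r θ : ℝ) : ℝ :=
  (volume (tiltedSquare r θ ∩ {p : ℝ × ℝ | p.1 ≤ 0})).toReal

/-!
Let `X` and `X'` be the abscissae, after rotation by `θ`, of two independent uniform points of the
square `Q` centered at the origin. Then `A_∞(r, θ) = P(r + X ≤ 0)` and
`A_∞(r, θ) ^ 2 = P(r + max X X' ≤ 0)`, and for `R = 1 / √2` the layer-cake formula evaluates the
integrals over `r ∈ [-R, R]` as `R - E X` and `R - E (max X X')`. Integrating over `θ` kills the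
first expectation, while Cauchy's formula `∫ max (L_θ p) (L_θ q) dθ = 2 |p - q|`, where `L_θ p` is
the abscissa of `p` rotated by `θ`, turns the second into twice the mean distance between two random
points of `Q`. This argument works for any probability measure on the disc of radius `R`; for the
square the mean distance is the classical `(2 + √2 + 5 log (1 + √2)) / 15`.
-/

open Set Function

section LayerCake

variable {Ω : Type*} [MeasurableSpace Ω]

lemma measureReal_add_nonpos_sq (μ : Measure Ω) [SFinite μ] (X : Ω → ℝ) (r : ℝ) :
    μ.real {ω | r + X ω ≤ 0} ^ 2 = (μ.prod μ).real {z | r + max (X z.1) (X z.2) ≤ 0} := by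
  rw [sq, ← measureReal_prod_prod]
  congr 1
  ext z
  simp [← max_add_add_left]

variable {μ : Measure Ω} [IsProbabilityMeasure μ] {R : ℝ}

lemma integral_measureReal_add_nonpos {X : Ω → ℝ} (hX : AEMeasurable X μ)
    (hXR : ∀ᵐ ω ∂μ, |X ω| ≤ R) :
    ∫ r in -R..R, μ.real {ω | r + X ω ≤ 0} = R - ∫ ω, X ω ∂μ := by
  have hR : 0 ≤ R := let ⟨_, h⟩ := hXR.exists; (abs_nonneg _).trans h
  have hint : Integrable X μ := .of_bound hX.aestronglyMeasurable R hXR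
  have hnonneg : 0 ≤ᵐ[μ] fun ω => R - X ω := by
    filter_upwards [hXR] with ω hω using sub_nonneg.2 (abs_le.1 hω).2
  have hle : (fun ω => R - X ω) ≤ᵐ[μ] fun _ => R + R := by
    filter_upwards [hXR] with ω hω
    linarith [(abs_le.1 hω).1]
  have hshift := intervalIntegral.integral_comp_sub_right (a := 0) (b := R + R)
    (fun r => μ.real {ω | r + X ω ≤ 0}) R
  rw [zero_sub, add_sub_cancel_right] at hshift
  calc ∫ r in -R..R, μ.real {ω | r + X ω ≤ 0}
      = ∫ t in Ioc 0 (R + R), μ.real {ω | t ≤ R - X ω} := by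
        rw [← hshift, intervalIntegral.integral_of_le (by positivity)]
        congr! 5 with _ ω
        constructor <;> intro h <;> linarith
    _ = ∫ ω, (R - X ω) ∂μ :=
        (((integrable_const R).sub hint).integral_eq_integral_Ioc_meas_le hnonneg hle).symm
    _ = R - ∫ ω, X ω ∂μ := by
        rw [integral_sub (integrable_const R) hint]
        simp

lemma integral_integral_measureReal_add_nonpos {X : ℝ → Ω → ℝ} (hX : Measurable (uncurry X))
    (hXR : ∀ᵐ ω ∂μ, ∀ θ, |X θ ω| ≤ R) (a b : ℝ) :
    ∫ θ in a..b, ∫ r in -R..R, μ.real {ω | r + X θ ω ≤ 0} =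
      (b - a) * R - ∫ ω, (∫ θ in a..b, X θ ω) ∂μ := by
  have : IsFiniteMeasure (volume.restrict (uIoc a b)) := isFiniteMeasure_restrict_Ioc _ _
  have hint : Integrable (uncurry X) ((volume.restrict (uIoc a b)).prod μ) := by
    refine .of_bound hX.aestronglyMeasurable R ?_
    filter_upwards [Measure.quasiMeasurePreserving_snd.ae hXR] with z hz using hz z.1
  have hint' : IntervalIntegrable (fun θ => ∫ ω, X θ ω ∂μ) volume a b :=
    intervalIntegrable_iff.2 hint.integral_prod_left
  have hslice (θ : ℝ) :
      ∫ r in -R..R, μ.real {ω | r + X θ ω ≤ 0} = R - ∫ ω, X θ ω ∂μ :=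
    integral_measureReal_add_nonpos (hX.comp measurable_prodMk_left).aemeasurable
      (hXR.mono fun _ h => h θ)
  simp_rw [hslice]
  rw [intervalIntegral.integral_sub (by simp) hint', intervalIntegral_integral_swap hint]
  simp

end LayerCake

/-- The abscissa of `p` after the plane is rotated by `θ`: the linear form whose level sets are the
boundaries of the half-planes `{x ≤ 0}` in the moving frame of a rotated figure. -/
noncomputable def rotatedFst (θ : ℝ) (p : ℝ × ℝ) : ℝ :=
  p.1 * cos θ - p.2 * sin θ

/-- The Euclidean distance on the plane; the `dist` of `ℝ × ℝ` is the sup distance. -/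
noncomputable def euclideanDist (p q : ℝ × ℝ) : ℝ :=
  √((p.1 - q.1) ^ 2 + (p.2 - q.2) ^ 2)

/-- The mass that `μ` gives to the left half-plane `{x ≤ 0}` after being rotated by `θ` and then
translated by `(r, 0)`. -/
noncomputable def leftMass (μ : Measure (ℝ × ℝ)) (r θ : ℝ) : ℝ :=
  μ.real {p | r + rotatedFst θ p ≤ 0}

lemma continuous_uncurry_rotatedFst : Continuous (uncurry rotatedFst) := by
  unfold rotatedFst uncurry
  fun_prop

lemma rotatedFst_sub (θ : ℝ) (p q : ℝ × ℝ) :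
    rotatedFst θ (p - q) = rotatedFst θ p - rotatedFst θ q := by
  simp only [rotatedFst, Prod.fst_sub, Prod.snd_sub]
  ring

lemma rotatedFst_eq_mul_cos_add (θ : ℝ) (p : ℝ × ℝ) :
    rotatedFst θ p = euclideanDist p 0 * cos (θ + Complex.arg ⟨p.1, p.2⟩) := by
  have hnorm : euclideanDist p 0 = ‖(⟨p.1, p.2⟩ : ℂ)‖ := by
    simp [euclideanDist, Complex.norm_def, Complex.normSq_apply, sq]
  rw [hnorm, cos_add, mul_sub, mul_left_comm, mul_left_comm _ (sin θ), Complex.norm_mul_cos_arg,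
    Complex.norm_mul_sin_arg, rotatedFst, mul_comm (cos θ), mul_comm (sin θ)]

lemma abs_rotatedFst_le (θ : ℝ) (p : ℝ × ℝ) : |rotatedFst θ p| ≤ euclideanDist p 0 := by
  have hnonneg : 0 ≤ euclideanDist p 0 := sqrt_nonneg _
  rw [rotatedFst_eq_mul_cos_add, abs_mul, abs_of_nonneg hnonneg]
  exact mul_le_of_le_one_right hnonneg (abs_cos_le_one _)

lemma integral_rotatedFst (p : ℝ × ℝ) : ∫ θ in (0 : ℝ)..(2 * π), rotatedFst θ p = 0 := by
  simp [rotatedFst_eq_mul_cos_add, add_comm (2 * π)]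

lemma integral_abs_cos_add (φ : ℝ) : ∫ θ in (0 : ℝ)..(2 * π), |cos (θ + φ)| = 4 := by
  have hperiodic : Periodic (fun θ => |cos θ|) π := fun θ => by simp
  have hhalf : ∫ θ in -(π / 2)..(-(π / 2) + π), |cos θ| = 2 := by
    rw [show -(π / 2) + π = π / 2 by ring]
    trans ∫ θ in -(π / 2)..(π / 2), cos θ
    · refine intervalIntegral.integral_congr fun θ hθ => abs_of_nonneg ?_
      rw [uIcc_of_le (by linarith [pi_pos])] at hθ
      exact cos_nonneg_of_mem_Icc hθ
    · rw [integral_cos, sin_neg, sin_pi_div_two]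
      norm_num
  calc ∫ θ in (0 : ℝ)..(2 * π), |cos (θ + φ)|
      = ∫ θ in φ..(φ + (2 : ℤ) • π), |cos θ| := by
        rw [intervalIntegral.integral_comp_add_right (fun θ => |cos θ|)]
        simp [add_comm]
    _ = (2 : ℤ) • ∫ θ in φ..(φ + π), |cos θ| :=
        hperiodic.intervalIntegral_add_zsmul_eq 2 φ fun _ _ =>
          continuous_cos.abs.intervalIntegrable _ _
    _ = 4 := by
        rw [hperiodic.intervalIntegral_add_eq φ (-(π / 2)), hhalf]
        norm_num

lemma integral_abs_rotatedFst (p : ℝ × ℝ) :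
    ∫ θ in (0 : ℝ)..(2 * π), |rotatedFst θ p| = 4 * euclideanDist p 0 := by
  have hnonneg : 0 ≤ euclideanDist p 0 := sqrt_nonneg _
  simp_rw [rotatedFst_eq_mul_cos_add, abs_mul, abs_of_nonneg hnonneg]
  rw [intervalIntegral.integral_const_mul, integral_abs_cos_add, mul_comm]

-- Cauchy's perimeter formula for the segment from `p` to `q`, a degenerate convex body.
lemma integral_max_rotatedFst (p q : ℝ × ℝ) :
    ∫ θ in (0 : ℝ)..(2 * π), max (rotatedFst θ p) (rotatedFst θ q) = 2 * euclideanDist p q := by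
  have hcont (p : ℝ × ℝ) : Continuous fun θ => rotatedFst θ p :=
    continuous_uncurry_rotatedFst.comp (.prodMk_left p)
  have hint (p : ℝ × ℝ) := (hcont p).intervalIntegrable (μ := volume) 0 (2 * π)
  have hmax (θ : ℝ) : max (rotatedFst θ p) (rotatedFst θ q) =
      2⁻¹ * (rotatedFst θ p + rotatedFst θ q + |rotatedFst θ (q - p)|) := by
    rw [rotatedFst_sub, sup_eq_half_smul_add_add_abs_sub' ℝ, smul_eq_mul]
  have hdist : euclideanDist (q - p) 0 = euclideanDist p q := by
    simp [euclideanDist, sub_sq_comm p.1, sub_sq_comm p.2]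
  simp_rw [hmax]
  rw [intervalIntegral.integral_const_mul,
    intervalIntegral.integral_add ((hint p).add (hint q)) ((hcont _).abs.intervalIntegrable _ _),
    intervalIntegral.integral_add (hint p) (hint q), integral_rotatedFst, integral_rotatedFst,
    integral_abs_rotatedFst, hdist]
  ring

section ProbabilityMeasure

variable {μ : Measure (ℝ × ℝ)} [IsProbabilityMeasure μ] {R : ℝ}

theorem integral_integral_leftMass (hμ : ∀ᵐ p ∂μ, euclideanDist p 0 ≤ R) :
    ∫ θ in (0 : ℝ)..(2 * π), ∫ r in -R..R, leftMass μ r θ = 2 * π * R := by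
  have hbound : ∀ᵐ p ∂μ, ∀ θ, |rotatedFst θ p| ≤ R :=
    hμ.mono fun p hp θ => (abs_rotatedFst_le θ p).trans hp
  simp_rw [leftMass]
  rw [integral_integral_measureReal_add_nonpos continuous_uncurry_rotatedFst.measurable hbound]
  simp [integral_rotatedFst]

theorem integral_integral_leftMass_sq (hμ : ∀ᵐ p ∂μ, euclideanDist p 0 ≤ R) :
    ∫ θ in (0 : ℝ)..(2 * π), ∫ r in -R..R, leftMass μ r θ ^ 2 =
      2 * π * R - 2 * ∫ z, euclideanDist z.1 z.2 ∂μ.prod μ := by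
  have hcont : Continuous (uncurry fun (θ : ℝ) (z : (ℝ × ℝ) × ℝ × ℝ) =>
      max (rotatedFst θ z.1) (rotatedFst θ z.2)) := by
    unfold rotatedFst uncurry
    fun_prop
  have hbound : ∀ᵐ z ∂μ.prod μ, ∀ θ, |max (rotatedFst θ z.1) (rotatedFst θ z.2)| ≤ R := by
    filter_upwards [Measure.quasiMeasurePreserving_fst.ae hμ,
      Measure.quasiMeasurePreserving_snd.ae hμ] with z h₁ h₂ θ
    exact abs_max_le_max_abs_abs.trans
      (max_le ((abs_rotatedFst_le θ z.1).trans h₁) ((abs_rotatedFst_le θ z.2).trans h₂))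
  simp_rw [leftMass, measureReal_add_nonpos_sq]
  rw [integral_integral_measureReal_add_nonpos hcont.measurable hbound]
  simp_rw [integral_max_rotatedFst, integral_const_mul, sub_zero]

end ProbabilityMeasure

section MeanDistance

lemma measurePreserving_prodProdProdComm {α β γ δ : Type*} [MeasurableSpace α]
    [MeasurableSpace β] [MeasurableSpace γ] [MeasurableSpace δ] (μa : Measure α) (μb : Measure β)
    (μc : Measure γ) (μd : Measure δ) [SFinite μa] [SFinite μb] [SFinite μc] [SFinite μd] :
    MeasurePreserving (Equiv.prodProdProdComm α β γ δ)
      ((μa.prod μb).prod (μc.prod μd)) ((μa.prod μc).prod (μb.prod μd)) := by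
  have hinner : MeasurePreserving (fun z : β × γ × δ => (z.2.1, z.1, z.2.2))
      (μb.prod (μc.prod μd)) (μc.prod (μb.prod μd)) :=
    (measurePreserving_prodAssoc μc μb μd).comp <|
      (Measure.measurePreserving_swap.prod (.id μd)).comp <|
        (measurePreserving_prodAssoc μb μc μd).symm
  exact (measurePreserving_prodAssoc μa μc (μb.prod μd)).symm.comp <|
    ((MeasurePreserving.id μa).prod hinner).comp <|
      measurePreserving_prodAssoc μa μb (μc.prod μd)

lemma integral_comp_abs_sub {f : ℝ → ℝ} (hf : Continuous f) {a b x : ℝ} (hx : x ∈ Icc a b) :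
    ∫ y in a..b, f |x - y| = (∫ u in (0 : ℝ)..(x - a), f u) + ∫ u in (0 : ℝ)..(b - x), f u := by
  have hcont : Continuous fun y => f |x - y| := by fun_prop
  rw [← intervalIntegral.integral_add_adjacent_intervals (hcont.intervalIntegrable a x)
    (hcont.intervalIntegrable x b)]
  congr 1
  · have h := intervalIntegral.integral_comp_sub_left (a := a) (b := x) f x
    rw [sub_self] at h
    rw [← h]
    refine intervalIntegral.integral_congr fun y hy => ?_
    rw [uIcc_of_le hx.1] at hy
    simp only [abs_of_nonneg (sub_nonneg.2 hy.2)]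
  · have h := intervalIntegral.integral_comp_sub_right (a := x) (b := b) f x
    rw [sub_self] at h
    rw [← h]
    refine intervalIntegral.integral_congr fun y hy => ?_
    rw [uIcc_of_le hx.2] at hy
    simp only [abs_sub_comm x, abs_of_nonneg (sub_nonneg.2 hy.1)]

lemma integral_integral_eq_integral_sub_mul {f : ℝ → ℝ} (hf : Continuous f) (a : ℝ) :
    ∫ t in (0 : ℝ)..a, ∫ u in (0 : ℝ)..t, f u = ∫ u in (0 : ℝ)..a, (a - u) * f u := by
  have hparts := intervalIntegral.integral_mul_deriv_eq_deriv_mul (a := 0) (b := a)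
    (u := fun t => a - t) (v := fun t => ∫ u in (0 : ℝ)..t, f u) (u' := fun _ => -1) (v' := f)
    (fun t _ => (hasDerivAt_id t).const_sub a)
    (fun t _ => hf.integral_hasStrictDerivAt 0 t |>.hasDerivAt) (by simp)
    (hf.intervalIntegrable _ _)
  simpa using hparts.symm

lemma integral_prod_comp_abs_sub {f : ℝ → ℝ} (hf : Continuous f) {a b : ℝ} (hab : a ≤ b) :
    ∫ z, f |z.1 - z.2| ∂(volume.restrict (Icc a b)).prod (volume.restrict (Icc a b)) =
      2 * ∫ u in (0 : ℝ)..(b - a), (b - a - u) * f u := by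
  have hint : IntegrableOn (fun z : ℝ × ℝ => f |z.1 - z.2|) (Icc a b ×ˢ Icc a b)
      (volume.prod volume) :=
    (by fun_prop : Continuous fun z : ℝ × ℝ => f |z.1 - z.2|).continuousOn.integrableOn_compact
      (isCompact_Icc.prod isCompact_Icc)
  rw [Measure.prod_restrict, setIntegral_prod _ hint]
  calc ∫ x in Icc a b, ∫ y in Icc a b, f |x - y|
      = ∫ x in a..b, ((∫ u in (0 : ℝ)..(x - a), f u) + ∫ u in (0 : ℝ)..(b - x), f u) := by
        rw [intervalIntegral.integral_of_le hab, ← integral_Icc_eq_integral_Ioc]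
        refine setIntegral_congr_fun measurableSet_Icc fun x hx => ?_
        rw [integral_Icc_eq_integral_Ioc, ← intervalIntegral.integral_of_le hab,
          integral_comp_abs_sub hf hx]
    _ = 2 * ∫ t in (0 : ℝ)..(b - a), ∫ u in (0 : ℝ)..t, f u := by
        rw [intervalIntegral.integral_add (Continuous.intervalIntegrable (by fun_prop) _ _)
            (Continuous.intervalIntegrable (by fun_prop) _ _),
          intervalIntegral.integral_comp_sub_right (fun t => ∫ u in (0 : ℝ)..t, f u),
          intervalIntegral.integral_comp_sub_left (fun t => ∫ u in (0 : ℝ)..t, f u), sub_self,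
          sub_self, two_mul]
    _ = _ := by rw [integral_integral_eq_integral_sub_mul hf]

lemma integral_prod_restrict_Icc_prod_comp_abs_sub {F : ℝ → ℝ → ℝ} (hF : Continuous (uncurry F))
    {a b c d : ℝ} (hab : a ≤ b) (hcd : c ≤ d) :
    ∫ z, F |z.1.1 - z.2.1| |z.1.2 - z.2.2|
        ∂(volume.restrict (Icc a b ×ˢ Icc c d)).prod (volume.restrict (Icc a b ×ˢ Icc c d)) =
      4 * ∫ u in (0 : ℝ)..(b - a), ∫ v in (0 : ℝ)..(d - c),
        (b - a - u) * (d - c - v) * F u v := by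
  have hcont : Continuous fun w : (ℝ × ℝ) × ℝ × ℝ => F |w.1.1 - w.1.2| |w.2.1 - w.2.2| := by
    fun_prop
  have hint : IntegrableOn (fun w : (ℝ × ℝ) × ℝ × ℝ => F |w.1.1 - w.1.2| |w.2.1 - w.2.2|)
      ((Icc a b ×ˢ Icc a b) ×ˢ Icc c d ×ˢ Icc c d) :=
    hcont.continuousOn.integrableOn_compact
      ((isCompact_Icc.prod isCompact_Icc).prod (isCompact_Icc.prod isCompact_Icc))
  have hinner : Continuous fun u => 2 * ∫ v in (0 : ℝ)..(d - c), (d - c - v) * F u v :=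
    (intervalIntegral.continuous_parametric_intervalIntegral_of_continuous' (by fun_prop)
      _ _).const_mul 2
  simp only [IntegrableOn, Measure.volume_eq_prod, ← Measure.prod_restrict] at hint ⊢
  calc _ = ∫ w, F |w.1.1 - w.1.2| |w.2.1 - w.2.2|
          ∂((volume.restrict (Icc a b)).prod (volume.restrict (Icc a b))).prod
            ((volume.restrict (Icc c d)).prod (volume.restrict (Icc c d))) :=
        (measurePreserving_prodProdProdComm _ _ _ _).integral_comp
          (Homeomorph.prodProdProdComm ℝ ℝ ℝ ℝ).measurableEmbedding _
    _ = 2 * ∫ u in (0 : ℝ)..(b - a),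
          (b - a - u) * (2 * ∫ v in (0 : ℝ)..(d - c), (d - c - v) * F u v) := by
        rw [integral_prod _ hint, ← integral_prod_comp_abs_sub hinner hab]
        refine integral_congr_ae (.of_forall fun w => ?_)
        exact integral_prod_comp_abs_sub (f := F |w.1 - w.2|) (by fun_prop) hcd
    _ = _ := by
        simp_rw [mul_left_comm _ (2 : ℝ), intervalIntegral.integral_const_mul, ← mul_assoc]
        norm_num [← intervalIntegral.integral_const_mul, mul_assoc]

lemma integrableOn_uIoc_prod_uIoc {f : ℝ × ℝ → ℝ} (hf : Continuous f) (a b c d : ℝ) :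
    IntegrableOn f (uIoc a b ×ˢ uIoc c d) :=
  (hf.continuousOn.integrableOn_compact (isCompact_uIcc.prod isCompact_uIcc)).mono_set
    (prod_mono uIoc_subset_uIcc uIoc_subset_uIcc)

lemma integral_integral_of_symm {μ : Measure ℝ} [SFinite μ] [NullSingletonClass μ] {f : ℝ → ℝ → ℝ}
    (hf : Integrable (uncurry f) (μ.prod μ)) (hsymm : ∀ x y, f x y = f y x) :
    ∫ x, ∫ y, f x y ∂μ ∂μ = 2 * ∫ x, (∫ y in Iic x, f x y ∂μ) ∂μ := by
  have hS : MeasurableSet {z : ℝ × ℝ | z.2 ≤ z.1} := measurableSet_le measurable_snd measurable_fst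
  have hbelow : ∫ z in {z | z.2 ≤ z.1}, uncurry f z ∂μ.prod μ =
      ∫ x, (∫ y in Iic x, f x y ∂μ) ∂μ := by
    rw [← integral_indicator hS, integral_prod _ (hf.indicator hS)]
    simp_rw [← integral_indicator measurableSet_Iic]
    rfl
  have habove : ∫ z in {z | z.2 ≤ z.1}ᶜ, uncurry f z ∂μ.prod μ =
      ∫ x, (∫ y in Iic x, f x y ∂μ) ∂μ := by
    rw [← integral_indicator hS.compl, integral_prod_symm _ (hf.indicator hS.compl)]
    simp_rw [integral_Iic_eq_integral_Iio, ← integral_indicator measurableSet_Iio]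
    congr! 4 with x y
    simp [indicator, hsymm x y]
  calc ∫ x, ∫ y, f x y ∂μ ∂μ
      = ∫ z, uncurry f z ∂μ.prod μ := (integral_prod _ hf).symm
    _ = 2 * ∫ x, (∫ y in Iic x, f x y ∂μ) ∂μ := by
        rw [← integral_add_compl hS hf, hbelow, habove, two_mul]

lemma intervalIntegral_intervalIntegral_of_symm {f : ℝ → ℝ → ℝ} (hf : Continuous (uncurry f))
    (hsymm : ∀ x y, f x y = f y x) {a b : ℝ} (hab : a ≤ b) :
    ∫ x in a..b, ∫ y in a..b, f x y = 2 * ∫ x in a..b, ∫ y in a..x, f x y := by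
  have hint : Integrable (uncurry f)
      ((volume.restrict (Ioc a b)).prod (volume.restrict (Ioc a b))) := by
    rw [Measure.prod_restrict, ← uIoc_of_le hab]
    exact integrableOn_uIoc_prod_uIoc hf a b a b
  simp_rw [intervalIntegral.integral_of_le hab]
  rw [integral_integral_of_symm hint hsymm]
  congr 1
  refine setIntegral_congr_fun measurableSet_Ioc fun x hx => ?_
  rw [Measure.restrict_restrict measurableSet_Iic, inter_comm, Ioc_inter_Iic, min_eq_right hx.2,
    ← intervalIntegral.integral_of_le hx.1.le]

lemma hasDerivAt_sqrt_one_add_sq (x : ℝ) :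
    HasDerivAt (fun x => √(1 + x ^ 2)) (x / √(1 + x ^ 2)) x := by
  have hpos : 0 < 1 + x ^ 2 := by positivity
  refine (((hasDerivAt_pow 2 x).const_add 1).sqrt hpos.ne').congr_deriv ?_
  field_simp
  norm_num

lemma integral_sqrt_one_add_sq (a b : ℝ) :
    ∫ x in a..b, √(1 + x ^ 2) =
      (b * √(1 + b ^ 2) + arsinh b) / 2 - (a * √(1 + a ^ 2) + arsinh a) / 2 := by
  have hcont : Continuous fun x : ℝ => √(1 + x ^ 2) := by fun_prop
  refine intervalIntegral.integral_eq_sub_of_hasDerivAt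
    (f := fun x => (x * √(1 + x ^ 2) + arsinh x) / 2) (fun x _ => ?_)
    (hcont.intervalIntegrable _ _)
  refine ((((hasDerivAt_id x).mul (hasDerivAt_sqrt_one_add_sq x)).add
    (hasDerivAt_arsinh x)).div_const 2).congr_deriv ?_
  have hsq : √(1 + x ^ 2) ^ 2 = 1 + x ^ 2 := sq_sqrt (by positivity)
  simp only [id]
  field_simp
  rw [hsq]
  ring

lemma integral_mul_sqrt_one_add_sq (a b : ℝ) :
    ∫ x in a..b, x * √(1 + x ^ 2) = √(1 + b ^ 2) ^ 3 / 3 - √(1 + a ^ 2) ^ 3 / 3 := by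
  have hcont : Continuous fun x : ℝ => x * √(1 + x ^ 2) := by fun_prop
  refine intervalIntegral.integral_eq_sub_of_hasDerivAt
    (f := fun x => √(1 + x ^ 2) ^ 3 / 3) (fun x _ => ?_) (hcont.intervalIntegrable _ _)
  refine (((hasDerivAt_sqrt_one_add_sq x).pow 3).div_const 3).congr_deriv ?_
  field_simp
  push_cast
  ring

lemma integral_mul_sqrt_sq_add_sq (g : ℝ → ℝ) {u : ℝ} (hu : 0 ≤ u) :
    ∫ v in (0 : ℝ)..u, g v * √(u ^ 2 + v ^ 2) =
      u ^ 2 * ∫ t in (0 : ℝ)..1, g (u * t) * √(1 + t ^ 2) := by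
  have hsqrt (t : ℝ) : √(u ^ 2 + (u * t) ^ 2) = u * √(1 + t ^ 2) := by
    rw [mul_pow, ← mul_one_add, sqrt_mul (sq_nonneg u), sqrt_sq hu]
  have hscale := intervalIntegral.smul_integral_comp_mul_left (a := 0) (b := 1)
    (fun v => g v * √(u ^ 2 + v ^ 2)) u
  rw [mul_zero, mul_one] at hscale
  simp_rw [← hscale, hsqrt, mul_left_comm _ u]
  rw [intervalIntegral.integral_const_mul, smul_eq_mul, ← mul_assoc, sq]

lemma integral_add_mul_mul_sqrt_one_add_sq (a b : ℝ) :
    ∫ t in (0 : ℝ)..1, (a + b * t) * √(1 + t ^ 2) =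
      a * ((√2 + log (1 + √2)) / 2) + b * ((2 * √2 - 1) / 3) := by
  have hsqrt : ∫ t in (0 : ℝ)..1, √(1 + t ^ 2) = (√2 + log (1 + √2)) / 2 := by
    rw [integral_sqrt_one_add_sq]
    norm_num [arsinh]
  have hmul : ∫ t in (0 : ℝ)..1, t * √(1 + t ^ 2) = (2 * √2 - 1) / 3 := by
    have hcube : √2 ^ 3 = 2 * √2 := by rw [pow_succ, sq_sqrt zero_le_two]
    rw [integral_mul_sqrt_one_add_sq]
    norm_num [hcube]
    ring
  simp_rw [add_mul, mul_assoc]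
  rw [intervalIntegral.integral_add (Continuous.intervalIntegrable (by fun_prop) _ _)
      (Continuous.intervalIntegrable (by fun_prop) _ _),
    intervalIntegral.integral_const_mul, intervalIntegral.integral_const_mul, hsqrt, hmul]

lemma integral_sq_mul_one_sub_mul_one_sub_mul (t : ℝ) :
    ∫ u in (0 : ℝ)..1, u ^ 2 * (1 - u) * (1 - u * t) = 1 / 12 + -(1 / 20) * t := by
  have hexpand (u : ℝ) : u ^ 2 * (1 - u) * (1 - u * t) =
      u ^ 2 - (1 + t) * u ^ 3 + t * u ^ 4 := by ring
  simp_rw [hexpand]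
  rw [intervalIntegral.integral_add, intervalIntegral.integral_sub]
  · norm_num
    ring
  all_goals exact Continuous.intervalIntegrable (by fun_prop) _ _

lemma integral_integral_mul_sqrt_sq_add_sq :
    ∫ u in (0 : ℝ)..1, ∫ v in (0 : ℝ)..1, (1 - u) * (1 - v) * √(u ^ 2 + v ^ 2) =
      (2 + √2 + 5 * log (1 + √2)) / 60 := by
  have hcont : Continuous (uncurry fun u v : ℝ => (1 - u) * (1 - v) * √(u ^ 2 + v ^ 2)) := by
    unfold uncurry
    fun_prop
  have hcont' : Continuous (uncurry fun u t : ℝ =>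
      u ^ 2 * (1 - u) * (1 - u * t) * √(1 + t ^ 2)) := by
    unfold uncurry
    fun_prop
  calc ∫ u in (0 : ℝ)..1, ∫ v in (0 : ℝ)..1, (1 - u) * (1 - v) * √(u ^ 2 + v ^ 2)
      = 2 * ∫ u in (0 : ℝ)..1, ∫ v in (0 : ℝ)..u, (1 - u) * (1 - v) * √(u ^ 2 + v ^ 2) :=
        intervalIntegral_intervalIntegral_of_symm hcont (fun u v => by ring_nf) zero_le_one
    -- The substitution `v = u * t` makes the integrand a polynomial in `u`.
    _ = 2 * ∫ u in (0 : ℝ)..1, ∫ t in (0 : ℝ)..1,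
          u ^ 2 * (1 - u) * (1 - u * t) * √(1 + t ^ 2) := by
        congr 1
        refine intervalIntegral.integral_congr fun u hu => ?_
        rw [uIcc_of_le zero_le_one] at hu
        simpa only [← intervalIntegral.integral_const_mul, mul_assoc] using
          integral_mul_sqrt_sq_add_sq (fun v => (1 - u) * (1 - v)) hu.1
    _ = 2 * ∫ t in (0 : ℝ)..1, (1 / 12 + -(1 / 20) * t) * √(1 + t ^ 2) := by
        rw [intervalIntegral_intervalIntegral_swap (integrableOn_uIoc_prod_uIoc hcont' _ _ _ _)]
        simp_rw [intervalIntegral.integral_mul_const,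
          integral_sq_mul_one_sub_mul_one_sub_mul]
    _ = (2 + √2 + 5 * log (1 + √2)) / 60 := by
        rw [integral_add_mul_mul_sqrt_one_add_sq]
        ring

end MeanDistance

/-- The unit square centered at the origin, with sides parallel to the axes: the figure whose tilted
and shifted copies are the `tiltedSquare r θ`. -/
def centeredSquare : Set (ℝ × ℝ) :=
  Icc (-(1 / 2)) (1 / 2) ×ˢ Icc (-(1 / 2)) (1 / 2)

/-- The counterclockwise rotation of the plane by the angle `θ`, as a linear map of `ℝ × ℝ`: its
determinant shows that tilting a figure preserves its area. -/
noncomputable def planeRotation (θ : ℝ) : (ℝ × ℝ) →ₗ[ℝ] ℝ × ℝ :=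
  Matrix.toLin (.finTwoProd ℝ) (.finTwoProd ℝ) !![cos θ, -sin θ; sin θ, cos θ]

lemma planeRotation_apply (θ : ℝ) (p : ℝ × ℝ) :
    planeRotation θ p = (rotatedFst θ p, p.1 * sin θ + p.2 * cos θ) := by
  ext <;> simp [planeRotation, rotatedFst, Matrix.toLin_finTwoProd_apply] <;> ring

lemma det_planeRotation (θ : ℝ) : LinearMap.det (planeRotation θ) = 1 := by
  rw [planeRotation, LinearMap.det_toLin, Matrix.det_fin_two_of, neg_mul, sub_neg_eq_add, ← sq,
    ← sq, cos_sq_add_sin_sq]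

lemma volume_image_add_planeRotation (w : ℝ × ℝ) (θ : ℝ) (S : Set (ℝ × ℝ)) :
    volume ((fun p => w + planeRotation θ p) '' S) = volume S := by
  rw [← image_image (w + ·), image_add_left, measure_preimage_add,
    Measure.addHaar_image_linearMap, det_planeRotation]
  simp

lemma tiltedSquare_eq_image (r θ : ℝ) :
    tiltedSquare r θ = (fun p => (r, 0) + planeRotation θ p) '' centeredSquare := by
  ext q
  simp only [tiltedSquare, centeredSquare, planeRotation_apply, rotatedFst, abs_le,
    Prod.mk_add_mk, zero_add, ← add_sub_assoc, mem_image, mem_prod, mem_Icc, Prod.exists,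
    mem_ofPred_eq, and_assoc, eq_comm]

lemma Ainf_eq_leftMass (r θ : ℝ) :
    Ainf r θ = leftMass (volume.restrict centeredSquare) r θ := by
  have hmeas : MeasurableSet {p | r + rotatedFst θ p ≤ 0} := by
    unfold rotatedFst
    exact measurableSet_le (by fun_prop) (by fun_prop)
  have hpreimage : {p | r + rotatedFst θ p ≤ 0} =
      (fun p => (r, 0) + planeRotation θ p) ⁻¹' {q | q.1 ≤ 0} := by
    ext p
    simp [planeRotation_apply]
  rw [Ainf, leftMass, measureReal_restrict_apply hmeas, hpreimage, measureReal_def,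
    tiltedSquare_eq_image, ← image_inter_preimage, inter_comm centeredSquare,
    volume_image_add_planeRotation]

instance isProbabilityMeasure_centeredSquare :
    IsProbabilityMeasure (volume.restrict centeredSquare) where
  measure_univ := by
    rw [Measure.restrict_apply_univ, centeredSquare, Measure.volume_eq_prod, Measure.prod_prod]
    norm_num

lemma ae_euclideanDist_zero_le_centeredSquare :
    ∀ᵐ p ∂volume.restrict centeredSquare, euclideanDist p 0 ≤ 1 / √2 := by
  filter_upwards [ae_restrict_mem (measurableSet_Icc.prod measurableSet_Icc)] with p hp
  rw [euclideanDist, ← sqrt_one, ← sqrt_div zero_le_one]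
  have hsq {x : ℝ} (hx : x ∈ Icc (-(1 / 2)) (1 / 2)) : x ^ 2 ≤ (1 / 2) ^ 2 :=
    sq_le_sq' hx.1 hx.2
  refine sqrt_le_sqrt ?_
  simp only [Prod.fst_zero, Prod.snd_zero, sub_zero]
  linarith [hsq hp.1, hsq hp.2]

lemma integral_euclideanDist_centeredSquare :
    ∫ z, euclideanDist z.1 z.2
        ∂(volume.restrict centeredSquare).prod (volume.restrict centeredSquare) =
      (2 + √2 + 5 * log (1 + √2)) / 15 := by
  have hcont : Continuous (uncurry fun u v : ℝ => √(u ^ 2 + v ^ 2)) := by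
    unfold uncurry
    fun_prop
  have hside : (-(1 / 2) : ℝ) ≤ 1 / 2 := by norm_num
  have hlength : (1 / 2 - -(1 / 2) : ℝ) = 1 := by norm_num
  have h := integral_prod_restrict_Icc_prod_comp_abs_sub hcont hside hside
  simp only [sq_abs, hlength, integral_integral_mul_sqrt_sq_add_sq] at h
  simp only [euclideanDist, centeredSquare, h]
  ring

theorem Ainf_variance :
    (1/(2*π*Real.sqrt 2)) *
        (∫ θ in (0:ℝ)..(2*π), ∫ r in (-(1/Real.sqrt 2))..(1/Real.sqrt 2), (Ainf r θ)^2)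
      - ((1/(2*π*Real.sqrt 2)) *
        ∫ θ in (0:ℝ)..(2*π), ∫ r in (-(1/Real.sqrt 2))..(1/Real.sqrt 2), Ainf r θ)^2
      = 1/4 - (1/(2*π*Real.sqrt 2)) *
          (4/15 + 2 * Real.log (1 + Real.sqrt 2) / 3 + 2 * Real.sqrt 2 / 15) := by
  have hmean : (1 / (2 * π * √2)) * (2 * π * (1 / √2)) = 1 / 2 := by
    field_simp
    exact (sq_sqrt zero_le_two).symm
  simp_rw [Ainf_eq_leftMass]
  rw [integral_integral_leftMass ae_euclideanDist_zero_le_centeredSquare,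
    integral_integral_leftMass_sq ae_euclideanDist_zero_le_centeredSquare,
    integral_euclideanDist_centeredSquare, mul_sub, hmean]
  ring
end

section
/- For any Schwartz function F supported on the positive reals, any integer ℓ, and X > 0, one has Σ_{n≥1} τ_{4ℓ}(n) F(n/X) = δ_{ℓ=0} · πX ∫_0^∞ F(r) dr + πX Σ_{n≥1} τ_{4ℓ}(n) B_{4ℓ}(F)(nX), where B_l(F)(ξ) = ∫_0^∞ F(y) J_l(2π√(ξy)) dy and J_l is the Bessel function of the first kind. -/
open Real MeasureTheory

/-- A lattice point viewed as a complex number. -/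
noncomputable def latC (p : ℤ × ℤ) : ℂ := (p.1 : ℝ) + (p.2 : ℝ) * Complex.I

/-- `τ_l(n) = Σ_{λ ∈ ℤ², ‖λ‖² = n} e^{i l θ_λ}`. -/
noncomputable def tau (l : ℤ) (n : ℕ) : ℂ :=
  ∑' p : {q : ℤ × ℤ // q.1^2 + q.2^2 = (n : ℤ)},
    Complex.exp ((l : ℂ) * (Complex.arg (latC p.1) : ℂ) * Complex.I)

/-- Bessel function of the first kind of nonnegative integer order, via its power series. -/
noncomputable def besselJNat (n : ℕ) (x : ℝ) : ℝ :=
  ∑' m : ℕ, (-1 : ℝ)^m / (m.factorial * (m + n).factorial) * (x/2)^(2*m + n)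

/-- Bessel function of the first kind of integer order, with `J_{-n} = (-1)^n J_n`. -/
noncomputable def besselJ (l : ℤ) (x : ℝ) : ℝ :=
  if 0 ≤ l then besselJNat l.toNat x else (-1 : ℝ)^((-l).toNat) * besselJNat (-l).toNat x

/-- The Hankel-type transform `B_l(F)(ξ) = ∫_0^∞ F(y) J_l(2π√(ξy)) dy`. -/
noncomputable def hankelB (l : ℤ) (F : ℝ → ℂ) (ξ : ℝ) : ℂ :=
  ∫ y in Set.Ioi (0:ℝ), F y * (besselJ l (2*π*Real.sqrt (ξ*y)) : ℂ)

/-! Since `F` vanishes to infinite order at `0`, the function `F (‖z‖ ^ 2) e^{i l arg z}` is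
Schwartz on the plane, so Poisson summation over `ℤ²` applies to it. Its Fourier transform is
computed in polar coordinates: by Bessel's integral for `J_l`, the angular integral reproduces
`e^{i l arg ξ}`, and the substitution `y = r ^ 2` turns the radial integral into `π (-i)^l
B_l(F)(‖ξ‖ ^ 2)`. Collecting lattice points by their squared norm gives the formula for `X = 1`.
The origin contributes nothing on the left, and on the right it contributes `B_l(F)(0)`, which is
`∫ F` or `0` according to whether `l = 0` because `J_l(0) = δ_{l=0}`. The general case is the case
`X = 1` for `F(· / X)`. -/

open scoped SchwartzMap FourierTransform

section FlatSchwartz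

variable {E : Type*} [NormedAddCommGroup E] [NormedSpace ℝ E]

lemma deriv_eq_zero_of_eqOn_Iic {f : ℝ → E} {a x : ℝ} (hd : DifferentiableAt ℝ f x)
    (hf : ∀ y ≤ a, f y = 0) (hx : x ≤ a) : deriv f x = 0 := by
  have hf' : Set.EqOn f (fun _ => 0) (Set.Iic a) := hf
  rw [← hd.derivWithin (uniqueDiffOn_Iic a x hx), derivWithin_congr hf' (hf x hx),
    derivWithin_fun_const, Pi.zero_apply]

lemma derivCLM_eq_zero_of_nonpos {F : 𝓢(ℝ, E)} (hF : ∀ x ≤ 0, F x = 0) :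
    ∀ x ≤ 0, SchwartzMap.derivCLM ℝ E F x = 0 :=
  fun _ hx => deriv_eq_zero_of_eqOn_Iic F.differentiableAt hF hx

lemma exists_norm_le_mul_abs_pow (k : ℕ) (F : 𝓢(ℝ, E)) (hF : ∀ x ≤ 0, F x = 0) :
    ∃ C, 0 ≤ C ∧ ∀ x, ‖F x‖ ≤ C * |x| ^ k := by
  induction k generalizing F with
  | zero =>
    exact ⟨_, apply_nonneg (SchwartzMap.seminorm ℝ 0 0) F,
      fun x => by simpa using F.norm_le_seminorm ℝ x⟩
  | succ k ih =>
    obtain ⟨C, hC₀, hC⟩ := ih _ (derivCLM_eq_zero_of_nonpos hF)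
    refine ⟨C, hC₀, fun x => ?_⟩
    rcases le_or_gt x 0 with hx | hx
    · rw [hF x hx, norm_zero]
      positivity
    have hderiv : ∀ y ∈ Set.Icc 0 x, ‖deriv F y‖ ≤ C * |x| ^ k := fun y hy => by
      refine (hC y).trans ?_
      gcongr
      exacts [hy.1, hy.2]
    simpa [hF 0 le_rfl, mul_assoc, ← pow_succ] using
      (convex_Icc 0 x).norm_image_sub_le_of_norm_deriv_le (fun y _ => F.differentiableAt) hderiv
        (Set.left_mem_Icc.2 hx.le) (Set.right_mem_Icc.2 hx.le)

lemma exists_norm_rpow_smul_le (s : ℝ) {F : 𝓢(ℝ, E)} (hF : ∀ x ≤ 0, F x = 0) :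
    ∃ C, 0 ≤ C ∧ ∀ x, ‖x ^ s • F x‖ ≤ C := by
  obtain ⟨k, hk⟩ := exists_nat_ge |s|
  obtain ⟨hks, hsk⟩ := abs_le.1 hk
  obtain ⟨C, hC₀, hC⟩ := exists_norm_le_mul_abs_pow k F hF
  refine ⟨C + SchwartzMap.seminorm ℝ k 0 F, by positivity, fun x => ?_⟩
  rcases le_or_gt x 0 with hx | hx
  · rw [hF x hx, smul_zero, norm_zero]
    positivity
  have hsmall : x ≤ 1 → x ^ s * ‖F x‖ ≤ C := fun h1 => calc
    x ^ s * ‖F x‖ ≤ x ^ (-k : ℝ) * (C * |x| ^ k) :=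
      mul_le_mul (Real.rpow_le_rpow_of_exponent_ge hx h1 hks) (hC x) (norm_nonneg _)
        (by positivity)
    _ = C := by
      rw [abs_of_pos hx, Real.rpow_neg hx.le, Real.rpow_natCast]
      field_simp
  have hlarge : 1 ≤ x → x ^ s * ‖F x‖ ≤ SchwartzMap.seminorm ℝ k 0 F := fun h1 => by
    refine le_trans ?_ (F.norm_pow_mul_le_seminorm ℝ k x)
    rw [Real.norm_of_nonneg hx.le, ← Real.rpow_natCast]
    gcongr
  rw [norm_smul, Real.norm_of_nonneg (by positivity)]
  rcases le_total x 1 with h1 | h1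
  · exact (hsmall h1).trans (le_add_of_nonneg_right (by positivity))
  · exact (hlarge h1).trans (le_add_of_nonneg_left hC₀)

lemma hasDerivAt_rpow_smul (s : ℝ) {F : 𝓢(ℝ, E)} (hF : ∀ x ≤ 0, F x = 0) (x : ℝ) :
    HasDerivAt (fun x : ℝ => x ^ s • F x)
      (x ^ s • SchwartzMap.derivCLM ℝ E F x + s • x ^ (s - 1) • F x) x := by
  rcases le_or_gt x 0 with hx | hx
  · rw [hF x hx, derivCLM_eq_zero_of_nonpos hF x hx]
    obtain ⟨C, hC₀, hC⟩ := exists_norm_rpow_smul_le (s - 2) hF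
    have hO : (fun y : ℝ => y ^ s • F y) =O[nhds x] fun y => ‖y - x‖ ^ 2 := by
      refine Asymptotics.IsBigO.of_bound C (Filter.Eventually.of_forall fun y => ?_)
      rcases le_or_gt y 0 with hy | hy
      · rw [hF y hy, smul_zero, norm_zero]
        positivity
      calc ‖y ^ s • F y‖ = ‖y ^ (s - 2) • F y‖ * y ^ 2 := by
            simp only [norm_smul, Real.norm_of_nonneg (Real.rpow_nonneg hy.le _)]
            rw [mul_right_comm, ← Real.rpow_natCast, ← Real.rpow_add hy]
            norm_num
        _ ≤ C * ‖‖y - x‖ ^ 2‖ := by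
            rw [norm_pow, norm_norm, Real.norm_of_nonneg (by linarith)]
            gcongr
            exacts [hC y, by linarith]
    simpa using (hO.hasFDerivAt (𝕜 := ℝ) one_lt_two).hasDerivAt
  · convert! (Real.hasDerivAt_rpow_const (Or.inl hx.ne')).fun_smul F.differentiableAt.hasDerivAt
      using 1
    rw [SchwartzMap.derivCLM_apply, smul_smul]

lemma deriv_rpow_smul (s : ℝ) {F : 𝓢(ℝ, E)} (hF : ∀ x ≤ 0, F x = 0) :
    deriv (fun x : ℝ => x ^ s • F x) =
      fun x => x ^ s • SchwartzMap.derivCLM ℝ E F x + s • x ^ (s - 1) • F x :=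
  funext fun x => (hasDerivAt_rpow_smul s hF x).deriv

lemma contDiff_rpow_smul (n : ℕ) (s : ℝ) {F : 𝓢(ℝ, E)} (hF : ∀ x ≤ 0, F x = 0) :
    ContDiff ℝ n (fun x : ℝ => x ^ s • F x) := by
  induction n generalizing F s with
  | zero =>
    exact contDiff_zero.2 (continuous_iff_continuousAt.2
      fun x => (hasDerivAt_rpow_smul s hF x).continuousAt)
  | succ n ih =>
    push_cast
    refine contDiff_succ_iff_deriv.2
      ⟨fun x => (hasDerivAt_rpow_smul s hF x).differentiableAt, by simp, ?_⟩
    rw [deriv_rpow_smul s hF]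
    exact (ih s (derivCLM_eq_zero_of_nonpos hF)).add ((ih (s - 1) hF).const_smul s)

lemma exists_norm_pow_mul_iteratedDeriv_rpow_smul_le (p n : ℕ) (s : ℝ) {F : 𝓢(ℝ, E)}
    (hF : ∀ x ≤ 0, F x = 0) :
    ∃ C, ∀ x, ‖x‖ ^ p * ‖iteratedDeriv n (fun x : ℝ => x ^ s • F x) x‖ ≤ C := by
  induction n generalizing F s with
  | zero =>
    obtain ⟨C, hC₀, hC⟩ := exists_norm_rpow_smul_le (p + s) hF
    refine ⟨C, fun x => ?_⟩
    rw [iteratedDeriv_zero]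
    rcases le_or_gt x 0 with hx | hx
    · rwa [hF x hx, smul_zero, norm_zero, mul_zero]
    · have h := hC x
      rwa [Real.rpow_add hx, Real.rpow_natCast, mul_smul, norm_smul, norm_pow] at h
  | succ n ih =>
    have hF' := derivCLM_eq_zero_of_nonpos hF
    obtain ⟨C, hC⟩ := ih s hF'
    obtain ⟨D, hD⟩ := ih (s - 1) hF
    refine ⟨C + ‖s‖ * D, fun x => ?_⟩
    rw [iteratedDeriv_succ', deriv_rpow_smul s hF,
      iteratedDeriv_fun_add (contDiff_rpow_smul n s hF').contDiffAt
        ((contDiff_rpow_smul n (s - 1) hF).const_smul s).contDiffAt,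
      iteratedDeriv_fun_const_smul_field]
    calc _ ≤ ‖x‖ ^ p * (_ + _) := by gcongr; exact norm_add_le _ _
      _ ≤ _ := by
        rw [mul_add, norm_smul, mul_left_comm]
        gcongr
        exacts [hC x, hD x]

/-- `x ↦ x ^ s • F x` as a Schwartz function, for `F` vanishing on the nonpositive reals, so that
the values of `Real.rpow` there are irrelevant. -/
noncomputable def rpowSMul (s : ℝ) (F : 𝓢(ℝ, E)) (hF : ∀ x ≤ 0, F x = 0) : 𝓢(ℝ, E) where
  toFun x := x ^ s • F x
  smooth' := contDiff_infty.2 fun n => contDiff_rpow_smul n s hF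
  decay' p n := by
    simpa only [norm_iteratedFDeriv_eq_norm_iteratedDeriv] using
      exists_norm_pow_mul_iteratedDeriv_rpow_smul_le p n s hF

end FlatSchwartz

section AngularChar

/-- The character `z ↦ e^{i l θ}` of degree `l` in the polar angle `θ = arg z`; its value at `0`
is `1`, since `Complex.arg 0 = 0`. -/
noncomputable def angularChar (l : ℤ) (z : ℂ) : ℂ :=
  Complex.exp (l * Complex.arg z * Complex.I)

lemma angularChar_neg (l : ℤ) (z : ℂ) :
    angularChar (-l) z = starRingEnd ℂ (angularChar l z) := by
  simp [angularChar, ← Complex.exp_conj]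

lemma angularChar_polarCoord_symm (l : ℤ) {r θ : ℝ} (hr : 0 < r) (hθ : θ ∈ Set.Ioc (-π) π) :
    angularChar l (Complex.polarCoord.symm (r, θ)) = Complex.exp (l * θ * Complex.I) := by
  have harg : Complex.arg (Complex.polarCoord.symm (r, θ)) = θ := by
    rw [Complex.polarCoord_symm_apply]
    exact_mod_cast Complex.arg_mul_cos_add_sin_mul_I hr hθ
  rw [angularChar, harg]

lemma norm_pow_mul_angularChar_natCast (k : ℕ) (z : ℂ) :
    (‖z‖ : ℂ) ^ k * angularChar k z = z ^ k := by
  conv_rhs => rw [← Complex.norm_mul_exp_arg_mul_I z]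
  rw [angularChar, mul_pow, ← Complex.exp_nat_mul, Int.cast_natCast, mul_assoc (k : ℂ)]

lemma hasTemperateGrowth_norm_pow_mul_angularChar (l : ℤ) :
    (fun z : ℂ => (‖z‖ : ℂ) ^ l.natAbs * angularChar l z).HasTemperateGrowth := by
  obtain ⟨k, rfl | rfl⟩ := l.eq_nat_or_neg
  · simp only [Int.natAbs_natCast, norm_pow_mul_angularChar_natCast]
    exact Function.HasTemperateGrowth.id.pow k
  · have hconj : ∀ z : ℂ, (‖z‖ : ℂ) ^ (-(k : ℤ)).natAbs * angularChar (-k) z =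
        (Complex.conjCLE z) ^ k := fun z => by
      rw [angularChar_neg, Complex.conjCLE_apply, ← map_pow, ← norm_pow_mul_angularChar_natCast k z,
        map_mul, map_pow, Complex.conj_ofReal, Int.natAbs_neg, Int.natAbs_natCast]
    simp only [hconj]
    exact Complex.conjCLE.hasTemperateGrowth.pow k

/-- The Schwartz function `z ↦ F (‖z‖ ^ 2) e^{i l arg z}` on the plane. It is built as
`G (‖z‖ ^ 2) * (‖z‖ ^ |l| e^{i l arg z})`, where `G x = x ^ (-|l| / 2) F x` is Schwartz by flatness
of `F` at `0` and the second factor is a polynomial in `z` or its conjugate. -/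
noncomputable def radialMulAngularChar (F : 𝓢(ℝ, ℂ)) (hF : ∀ x ≤ 0, F x = 0) (l : ℤ) :
    𝓢(ℂ, ℂ) :=
  SchwartzMap.smulLeftCLM ℂ (fun z : ℂ => (‖z‖ : ℂ) ^ l.natAbs * angularChar l z)
    (SchwartzMap.compCLM ℂ (Function.hasTemperateGrowth_norm_sq (H := ℂ))
      ⟨1, 1, fun z => by
        rw [Real.norm_of_nonneg (sq_nonneg _)]
        nlinarith [sq_nonneg (‖z‖ - 1)]⟩
      (rpowSMul (-l.natAbs / 2) F hF))

lemma radialMulAngularChar_apply (F : 𝓢(ℝ, ℂ)) (hF : ∀ x ≤ 0, F x = 0) (l : ℤ) (z : ℂ) :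
    radialMulAngularChar F hF l z = F (‖z‖ ^ 2) * angularChar l z := by
  have hG : ∀ x, rpowSMul (-l.natAbs / 2) F hF x = x ^ (-l.natAbs / 2 : ℝ) • F x := fun _ => rfl
  rw [radialMulAngularChar, SchwartzMap.smulLeftCLM_apply_apply
    (hasTemperateGrowth_norm_pow_mul_angularChar l), SchwartzMap.compCLM_apply,
    Function.comp_apply, hG]
  rcases eq_or_ne z 0 with rfl | hz
  · simp [hF 0 le_rfl]
  have hpow : (‖z‖ ^ 2) ^ (-l.natAbs / 2 : ℝ) = (‖z‖ ^ l.natAbs)⁻¹ := by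
    rw [← Real.rpow_natCast, ← Real.rpow_mul (norm_nonneg z), ← Real.rpow_natCast,
      ← Real.rpow_neg (norm_nonneg z)]
    congr 1
    push_cast
    ring
  have hz' : (‖z‖ : ℂ) ≠ 0 := by simpa using hz
  rw [hpow, Complex.real_smul, smul_eq_mul]
  push_cast
  field_simp

end AngularChar

section BesselIntegral

lemma intervalIntegral_exp_int_mul_I (m : ℤ) :
    ∫ θ in -π..π, Complex.exp (m * θ * Complex.I) = if m = 0 then (2 * π : ℂ) else 0 := by
  split_ifs with hm
  · simp [hm, two_mul]
  have hmI : (m : ℂ) * Complex.I ≠ 0 := by simp [hm]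
  have hendpoints :
      Complex.exp (m * Complex.I * (π : ℝ)) = Complex.exp (m * Complex.I * (-π : ℝ)) :=
    Complex.exp_eq_exp_iff_exists_int.2 ⟨m, by push_cast; ring⟩
  simp only [mul_right_comm _ _ Complex.I]
  rw [integral_exp_mul_complex hmI, hendpoints, sub_self, zero_div]

lemma hasSum_intervalIntegral_of_hasSum_mul_exp_int {κ : Type*} [Countable κ] {a : κ → ℂ}
    {m : κ → ℤ} {f : ℝ → ℂ} (ha : Summable fun k => ‖a k‖)
    (hf : ∀ θ : ℝ, HasSum (fun k => a k * Complex.exp (m k * θ * Complex.I)) (f θ)) :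
    HasSum (fun k => a k * if m k = 0 then (2 * π : ℂ) else 0) (∫ θ in -π..π, f θ) := by
  have hnorm (k : κ) (θ : ℝ) : ‖Complex.exp (m k * θ * Complex.I)‖ = 1 := by
    rw [← Complex.ofReal_intCast, ← Complex.ofReal_mul, Complex.norm_exp_ofReal_mul_I]
  have h := intervalIntegral.hasSum_integral_of_dominated_convergence (μ := volume)
    (a := -π) (b := π) (fun k _ => ‖a k‖) (fun k => by fun_prop)
    (fun k => .of_forall fun θ _ => by rw [norm_mul, hnorm, mul_one])
    (.of_forall fun _ _ => ha) intervalIntegrable_const (.of_forall fun θ _ => hf θ)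
  simpa only [intervalIntegral.integral_const_mul, intervalIntegral_exp_int_mul_I] using h

lemma hasSum_exp_mul_exp (a b : ℂ) :
    HasSum (fun p : ℕ × ℕ => a ^ p.1 / p.1.factorial * (b ^ p.2 / p.2.factorial))
      (Complex.exp a * Complex.exp b) := by
  have hexp (z : ℂ) : Complex.exp z = ∑' k : ℕ, z ^ k / k.factorial := by
    rw [Complex.exp_eq_exp_ℂ, NormedSpace.exp_eq_tsum_div]
  have hnorm (z : ℂ) : Summable fun k : ℕ => ‖z ^ k / k.factorial‖ :=
    NormedSpace.norm_expSeries_div_summable z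
  rw [hexp, hexp, tsum_mul_tsum_of_summable_norm (hnorm a) (hnorm b)]
  exact (summable_mul_of_summable_norm (hnorm a) (hnorm b)).hasSum

lemma hasSum_exp_mul_exp_cos (l : ℤ) (c θ : ℂ) :
    HasSum (fun p : ℕ × ℕ => c ^ p.1 / p.1.factorial * (c ^ p.2 / p.2.factorial) *
        Complex.exp ((l + p.1 - p.2 : ℤ) * θ * Complex.I))
      (Complex.exp (l * θ * Complex.I) * Complex.exp (2 * c * Complex.cos θ)) := by
  have hcos : Complex.exp (2 * c * Complex.cos θ) =
      Complex.exp (c * Complex.exp (θ * Complex.I)) *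
        Complex.exp (c * Complex.exp (-θ * Complex.I)) := by
    rw [← Complex.exp_add, Complex.cos]
    ring_nf
  have hexp (p : ℕ × ℕ) : Complex.exp ((l + p.1 - p.2 : ℤ) * θ * Complex.I) =
      Complex.exp (l * θ * Complex.I) * (Complex.exp (θ * Complex.I) ^ p.1 *
        Complex.exp (-θ * Complex.I) ^ p.2) := by
    simp only [← Complex.exp_nat_mul, ← Complex.exp_add]
    push_cast
    ring_nf
  rw [hcos]
  refine ((hasSum_exp_mul_exp _ _).mul_left _).congr_fun fun p => ?_
  rw [hexp]
  ring

lemma hasSum_intervalIntegral_exp_natCast_mul_exp_cos (n : ℕ) (c : ℂ) :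
    HasSum (fun m : ℕ => c ^ (2 * m + n) / (m.factorial * (m + n).factorial) * (2 * π))
      (∫ θ in -π..π, Complex.exp (n * θ * Complex.I) * Complex.exp (2 * c * Complex.cos θ)) := by
  have hinj : Function.Injective fun m : ℕ => (m, m + n) := fun a b h => (Prod.mk.inj h).1
  refine ((hinj.hasSum_iff fun p hp => ?_).2 (hasSum_intervalIntegral_of_hasSum_mul_exp_int
    (hasSum_exp_mul_exp c c).summable.norm (hasSum_exp_mul_exp_cos n c ·))).congr_fun fun m => ?_
  · rw [if_neg fun h => hp ⟨p.1, Prod.ext rfl (by dsimp only; omega)⟩, mul_zero]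
  · rw [Function.comp_apply, if_pos (by push_cast; ring), two_mul, add_assoc, pow_add,
      div_mul_div_comm]

lemma intervalIntegral_exp_natCast_mul_exp_cos (n : ℕ) (x : ℝ) :
    ∫ θ in -π..π, Complex.exp (n * θ * Complex.I) * Complex.exp (-(x * Real.cos θ) * Complex.I) =
      2 * π * (-Complex.I) ^ n * besselJNat n x := by
  have hpow (m : ℕ) : (-Complex.I * (x / 2)) ^ (2 * m + n) =
      (-1) ^ m * (-Complex.I) ^ n * (x / 2) ^ (2 * m + n) := by
    rw [mul_pow, pow_add (-Complex.I), pow_mul, neg_sq, Complex.I_sq]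
  have hexp (θ : ℝ) : Complex.exp (-(x * Real.cos θ) * Complex.I) =
      Complex.exp (2 * (-Complex.I * (x / 2)) * Complex.cos θ) := by
    push_cast
    ring_nf
  simp only [hexp]
  rw [← (hasSum_intervalIntegral_exp_natCast_mul_exp_cos n _).tsum_eq, besselJNat,
    Complex.ofReal_tsum, ← tsum_mul_left]
  refine tsum_congr fun m => ?_
  rw [hpow]
  push_cast
  ring

lemma besselJ_natCast (n : ℕ) (x : ℝ) : besselJ n x = besselJNat n x := by
  simp [besselJ]

lemma besselJ_neg_natCast (n : ℕ) (x : ℝ) : besselJ (-n) x = (-1) ^ n * besselJNat n x := by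
  rcases n.eq_zero_or_pos with rfl | hn
  · simp [besselJ]
  · rw [besselJ, if_neg (by omega), neg_neg, Int.toNat_natCast]

theorem intervalIntegral_exp_mul_exp_cos (l : ℤ) (x : ℝ) :
    ∫ θ in -π..π, Complex.exp (l * θ * Complex.I) * Complex.exp (-(x * Real.cos θ) * Complex.I) =
      2 * π * (-Complex.I) ^ l * besselJ l x := by
  obtain ⟨n, rfl | rfl⟩ := l.eq_nat_or_neg
  · simp only [Int.cast_natCast, zpow_natCast, besselJ_natCast,
      intervalIntegral_exp_natCast_mul_exp_cos]
  have hI : (-Complex.I) ^ (-n : ℤ) * (-1) ^ n = (-Complex.I) ^ n := by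
    rw [zpow_neg, zpow_natCast, ← inv_pow, inv_neg, Complex.inv_I, neg_neg, ← mul_pow, mul_neg_one]
  have hneg := intervalIntegral.integral_comp_neg (a := -π) (b := π) fun θ : ℝ =>
    Complex.exp (n * θ * Complex.I) * Complex.exp (-(x * Real.cos θ) * Complex.I)
  rw [neg_neg, intervalIntegral_exp_natCast_mul_exp_cos, ← hI] at hneg
  rw [besselJ_neg_natCast]
  simp only [Real.cos_neg] at hneg
  push_cast at hneg ⊢
  simp only [mul_neg, neg_mul] at hneg ⊢
  rw [hneg]
  ring

theorem intervalIntegral_exp_mul_exp_cos_sub (l : ℤ) (x φ : ℝ) :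
    ∫ θ in -π..π,
        Complex.exp (l * θ * Complex.I) * Complex.exp (-(x * Real.cos (θ - φ)) * Complex.I) =
      2 * π * (-Complex.I) ^ l * besselJ l x * Complex.exp (l * φ * Complex.I) := by
  let h (θ : ℝ) : ℂ :=
    Complex.exp (l * θ * Complex.I) * Complex.exp (-(x * Real.cos θ) * Complex.I)
  have hperiodic : Function.Periodic h (2 * π) := fun θ => by
    simp only [h, Real.cos_add_two_pi]
    congr 1
    exact Complex.exp_eq_exp_iff_exists_int.2 ⟨l, by push_cast; ring⟩
  have hshift (θ : ℝ) :
      Complex.exp (l * θ * Complex.I) * Complex.exp (-(x * Real.cos (θ - φ)) * Complex.I) =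
        Complex.exp (l * φ * Complex.I) * h (θ - φ) := by
    simp only [h, ← Complex.exp_add]
    push_cast
    ring_nf
  have hperiod : ∫ θ in -π - φ..π - φ, h θ = ∫ θ in -π..π, h θ := by
    convert hperiodic.intervalIntegral_add_eq (-π - φ) (-π) using 2 <;> ring
  simp only [hshift]
  rw [intervalIntegral.integral_const_mul, intervalIntegral.integral_comp_sub_right, hperiod,
    intervalIntegral_exp_mul_exp_cos, mul_comm]

end BesselIntegral

section FourierAngularChar

lemma inner_polarCoord_symm (r θ : ℝ) (ξ : ℂ) :
    inner ℝ (Complex.polarCoord.symm (r, θ)) ξ = r * ‖ξ‖ * Real.cos (θ - Complex.arg ξ) := by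
  rw [Complex.polarCoord_symm_apply, Complex.inner, Real.cos_sub]
  simp only [map_mul, Complex.conj_ofReal, map_add, Complex.conj_I, mul_neg, Complex.mul_re,
    Complex.ofReal_re, Complex.add_re, Complex.neg_re, Complex.I_re, mul_zero, Complex.ofReal_im,
    Complex.I_im, mul_one, sub_self, neg_zero, add_zero, Complex.add_im, Complex.neg_im,
    Complex.mul_im, zero_add, zero_mul, sub_zero, sub_neg_eq_add]
  linear_combination (-r * Real.cos θ) * Complex.norm_mul_cos_arg ξ -
    r * Real.sin θ * Complex.norm_mul_sin_arg ξ

lemma fourierKernel_smul_mul_angularChar_polarCoord_symm (g : ℝ → ℂ) (l : ℤ) (ξ : ℂ) {r θ : ℝ}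
    (hr : 0 < r) (hθ : θ ∈ Set.Ioc (-π) π) :
    Real.fourierChar (-inner ℝ (Complex.polarCoord.symm (r, θ)) ξ) •
        (g ‖Complex.polarCoord.symm (r, θ)‖ * angularChar l (Complex.polarCoord.symm (r, θ))) =
      g r * (Complex.exp (l * θ * Complex.I) *
        Complex.exp (-((2 * π * r * ‖ξ‖ : ℝ) * Real.cos (θ - Complex.arg ξ)) * Complex.I)) := by
  rw [angularChar_polarCoord_symm l hr hθ, Complex.norm_polarCoord_symm, abs_of_pos hr,
    inner_polarCoord_symm, Circle.smul_def, Real.fourierChar_apply, smul_eq_mul]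
  push_cast
  ring_nf

lemma integrableOn_mul_exp_mul_exp_cos {g : ℝ → ℂ}
    (hg : IntegrableOn (fun r : ℝ => r * g r) (Set.Ioi 0)) (l : ℤ) (ρ φ : ℝ) :
    IntegrableOn (fun p : ℝ × ℝ => p.1 * g p.1 * (Complex.exp (l * p.2 * Complex.I) *
        Complex.exp (-((2 * π * p.1 * ρ : ℝ) * Real.cos (p.2 - φ)) * Complex.I)))
      (Set.Ioi 0 ×ˢ Set.Ioo (-π) π) (volume.prod volume) := by
  have hone : IntegrableOn (fun _ : ℝ => (1 : ℂ)) (Set.Ioo (-π) π) := integrableOn_const (by simp)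
  have hpolar := hg.mul_prod hone
  simp only [mul_one, Measure.prod_restrict] at hpolar
  refine hpolar.mul_bdd (c := 1) (by fun_prop) (.of_forall fun p => le_of_eq ?_)
  rw [norm_mul, ← Complex.ofReal_intCast, ← Complex.ofReal_mul, ← Complex.ofReal_mul,
    ← Complex.ofReal_neg, Complex.norm_exp_ofReal_mul_I, Complex.norm_exp_ofReal_mul_I, mul_one]

theorem fourier_comp_norm_mul_angularChar {g : ℝ → ℂ}
    (hg : IntegrableOn (fun r : ℝ => r * g r) (Set.Ioi 0)) (l : ℤ) (ξ : ℂ) :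
    𝓕 (fun z => g ‖z‖ * angularChar l z) ξ = 2 * π * (-Complex.I) ^ l *
      (∫ r in Set.Ioi 0, r * g r * besselJ l (2 * π * r * ‖ξ‖)) * angularChar l ξ := by
  let K (r θ : ℝ) : ℂ := Complex.exp (l * θ * Complex.I) *
    Complex.exp (-((2 * π * r * ‖ξ‖ : ℝ) * Real.cos (θ - Complex.arg ξ)) * Complex.I)
  have hK (r : ℝ) : ∫ θ in Set.Ioo (-π) π, r * g r * K r θ =
      2 * π * (-Complex.I) ^ l * (r * g r * besselJ l (2 * π * r * ‖ξ‖)) * angularChar l ξ := by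
    rw [integral_const_mul, ← integral_Ioc_eq_integral_Ioo,
      ← intervalIntegral.integral_of_le (neg_le_self Real.pi_pos.le),
      intervalIntegral_exp_mul_exp_cos_sub, angularChar]
    ring
  calc 𝓕 (fun z => g ‖z‖ * angularChar l z) ξ
      = ∫ p in Set.Ioi (0 : ℝ) ×ˢ Set.Ioo (-π) π, p.1 * g p.1 * K p.1 p.2 := by
        rw [Real.fourier_eq, ← Complex.integral_comp_polarCoord_symm, polarCoord_target]
        refine setIntegral_congr_fun (measurableSet_Ioi.prod measurableSet_Ioo) fun p hp => ?_
        rw [fourierKernel_smul_mul_angularChar_polarCoord_symm g l ξ hp.1 ⟨hp.2.1, hp.2.2.le⟩,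
          Complex.real_smul, ← mul_assoc]
    _ = ∫ r in Set.Ioi (0 : ℝ), ∫ θ in Set.Ioo (-π) π, r * g r * K r θ := by
        rw [Measure.volume_eq_prod,
          setIntegral_prod _ (integrableOn_mul_exp_mul_exp_cos hg l ‖ξ‖ (Complex.arg ξ))]
    _ = _ := by
        simp only [hK, integral_mul_const, integral_const_mul]

lemma integral_Ioi_mul_comp_sq_mul_besselJ (F : ℝ → ℂ) (l : ℤ) {ρ : ℝ} (hρ : 0 ≤ ρ) :
    ∫ r in Set.Ioi (0 : ℝ), r * F (r ^ 2) * besselJ l (2 * π * r * ρ) =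
      hankelB l F (ρ ^ 2) / 2 := by
  rw [hankelB, ← integral_comp_rpow_Ioi_of_pos (g := fun y => F y * _) two_pos, ← integral_div]
  refine setIntegral_congr_fun measurableSet_Ioi fun r hr => ?_
  have hsqrt : √(ρ ^ 2 * r ^ 2) = r * ρ := by
    rw [← mul_pow, Real.sqrt_sq (mul_nonneg hρ (le_of_lt hr)), mul_comm]
  have hexponent : (2 : ℝ) - 1 = 1 := by norm_num
  simp only [hexponent, Real.rpow_one, Real.rpow_two, hsqrt, Complex.real_smul, mul_assoc]
  push_cast
  ring

lemma integrableOn_Ioi_mul_comp_sq {F : ℝ → ℂ} (hF : IntegrableOn F (Set.Ioi 0)) :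
    IntegrableOn (fun r : ℝ => r * F (r ^ 2)) (Set.Ioi 0) := by
  rw [← integrableOn_Ioi_comp_rpow_iff' _ two_ne_zero] at hF
  have hexponent : (2 : ℝ) - 1 = 1 := by norm_num
  simpa only [hexponent, Real.rpow_one, Real.rpow_two, Complex.real_smul] using hF

theorem fourier_comp_norm_sq_mul_angularChar {F : ℝ → ℂ} (hF : IntegrableOn F (Set.Ioi 0))
    (l : ℤ) (ξ : ℂ) :
    𝓕 (fun z => F (‖z‖ ^ 2) * angularChar l z) ξ =
      π * (-Complex.I) ^ l * hankelB l F (‖ξ‖ ^ 2) * angularChar l ξ := by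
  rw [fourier_comp_norm_mul_angularChar (g := fun r => F (r ^ 2)) (integrableOn_Ioi_mul_comp_sq hF),
    integral_Ioi_mul_comp_sq_mul_besselJ F l (norm_nonneg ξ)]
  ring

end FourierAngularChar

section Poisson

open UnitAddTorus

variable {ι : Type*}

/-- The quotient map from `ℝ^ι` to the torus `(ℝ/ℤ)^ι`. -/
def torusProj : C(ι → ℝ, UnitAddTorus ι) where
  toFun x i := x i
  continuous_toFun := by fun_prop

lemma isQuotientMap_torusProj : Topology.IsQuotientMap (torusProj (ι := ι)) :=
  (IsOpenQuotientMap.piMap fun _ : ι => QuotientAddGroup.isOpenQuotientMap_mk).isQuotientMap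

lemma torusProj_eq_iff {x y : ι → ℝ} :
    torusProj x = torusProj y ↔ ∃ m : ι → ℤ, x = y + fun i => (m i : ℝ) := by
  have hcoord (i : ι) : (x i : UnitAddCircle) = y i ↔ ∃ m : ℤ, x i = y i + m := by
    rw [QuotientAddGroup.eq_iff_sub_mem, AddSubgroup.mem_zmultiples_iff]
    simp only [zsmul_eq_mul, mul_one, eq_comm (b := x i - y i), sub_eq_iff_eq_add']
  simp only [torusProj, ContinuousMap.coe_mk, funext_iff, hcoord, Pi.add_apply, Classical.skolem]

/-- The sum of the translates of `f` by the integer points of `ℝ^ι`. -/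
noncomputable def periodization (f : (ι → ℝ) → ℂ) (x : ι → ℝ) : ℂ :=
  ∑' n : ι → ℤ, f (x + fun i => (n i : ℝ))

lemma periodization_zero_right (f : (ι → ℝ) → ℂ) :
    periodization f 0 = ∑' n : ι → ℤ, f fun i => n i := by
  simp only [periodization, zero_add]

lemma periodization_add_intCast (f : (ι → ℝ) → ℂ) (x : ι → ℝ) (m : ι → ℤ) :
    periodization f (x + fun i => (m i : ℝ)) = periodization f x := by
  have h := (Equiv.addLeft m).tsum_eq fun n => f (x + fun i => (n i : ℝ))
  simpa [periodization, add_assoc, Pi.add_def] using h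

variable [Fintype ι]

lemma mFourier_torusProj (k : ι → ℤ) (x : ι → ℝ) :
    mFourier k (torusProj x) = Real.fourierChar (∑ i, k i * x i) := by
  rw [Real.fourierChar_apply, Complex.ofReal_mul, Complex.ofReal_sum, Finset.mul_sum,
    Finset.sum_mul, Complex.exp_sum]
  refine Finset.prod_congr rfl fun i _ => ?_
  change fourier (k i) (x i : UnitAddCircle) = _
  rw [fourier_coe_apply]
  push_cast
  ring_nf

lemma mFourier_torusProj_add_intCast (k : ι → ℤ) (x : ι → ℝ) (m : ι → ℤ) :
    mFourier k (torusProj (x + fun i => (m i : ℝ))) = mFourier k (torusProj x) :=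
  congrArg _ (torusProj_eq_iff.2 ⟨m, rfl⟩)

lemma hasSum_setIntegral_comp_add_intCast {E : Type*} [NormedAddCommGroup E] [NormedSpace ℝ E]
    {f : (ι → ℝ) → E} (hf : Integrable f) :
    HasSum (fun n : ι → ℤ => ∫ x in Set.univ.pi fun _ => Set.Ioc 0 1, f (x + fun i => (n i : ℝ)))
      (∫ x, f x) := by
  let tile (x : ι → ℝ) : ι → ℤ := fun i => ⌈x i⌉ - 1
  have htile : Measurable tile :=
    measurable_pi_iff.2 fun i => (Int.measurable_ceil.comp (measurable_pi_apply i)).sub_const 1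
  have hcover : ⋃ n, tile ⁻¹' {n} = Set.univ := by
    rw [← Set.preimage_iUnion, Set.iUnion_of_singleton, Set.preimage_univ]
  have hcube : ∀ n : ι → ℤ, (fun x => x + fun i => (n i : ℝ)) ⁻¹' (tile ⁻¹' {n}) =
      Set.univ.pi fun _ => Set.Ioc 0 1 := fun n => by
    ext x
    simp [tile, funext_iff, sub_eq_iff_eq_add', add_comm, Int.ceil_eq_iff]
  have h := hasSum_integral_iUnion (fun n => htile (measurableSet_singleton n))
    (pairwise_disjoint_fiber tile) hf.integrableOn
  rw [hcover, setIntegral_univ] at h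
  refine h.congr_fun fun n => ?_
  rw [← hcube n, (measurePreserving_add_right volume fun i => (n i : ℝ)).setIntegral_preimage_emb
    (measurableEmbedding_addRight _)]

lemma mFourierCoeff_eq_integral_of_eq_periodization {f : (ι → ℝ) → ℂ} (hf : Integrable f)
    {P : UnitAddTorus ι → ℂ} (hP : ∀ x, P (torusProj x) = periodization f x) (k : ι → ℤ) :
    mFourierCoeff P k = ∫ x, mFourier (-k) (torusProj x) * f x := by
  let g (x : ι → ℝ) : ℂ := mFourier (-k) (torusProj x) * f x
  have hg : Integrable g :=
    hf.bdd_mul (c := 1) ((mFourier (-k)).comp torusProj).continuous.aestronglyMeasurable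
      (Filter.Eventually.of_forall fun x =>
        ((mFourier (-k)).norm_coe_le_norm _).trans mFourier_norm.le)
  have hint : ∀ n : ι → ℤ, IntegrableOn (fun x => g (x + fun i => (n i : ℝ)))
      (Set.univ.pi fun _ => Set.Ioc 0 1) := fun n => (hg.comp_add_right _).integrableOn
  have hnorm : Summable fun n : ι → ℤ =>
      ∫ x in Set.univ.pi fun _ => Set.Ioc 0 1, ‖g (x + fun i => (n i : ℝ))‖ :=
    (hasSum_setIntegral_comp_add_intCast hg.norm).summable
  have hcube : {x : ι → ℝ | ∀ i, x i ∈ Set.Ioc ((0 : ι → ℝ) i) ((0 : ι → ℝ) i + 1)} =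
      Set.univ.pi (fun _ : ι => Set.Ioc (0 : ℝ) 1) := by
    ext x
    simp
  have hperiodic : ∀ x : ι → ℝ, mFourier (-k) (torusProj x) • P (torusProj x) =
      ∑' n : ι → ℤ, g (x + fun i => (n i : ℝ)) := fun x => by
    simp only [g, hP, periodization, mFourier_torusProj_add_intCast, tsum_mul_left, smul_eq_mul]
  calc mFourierCoeff P k
      = ∫ x in Set.univ.pi fun _ => Set.Ioc 0 1, mFourier (-k) (torusProj x) • P (torusProj x) := by
        rw [mFourierCoeff_eq_integral P k 0, hcube]
        rfl
    _ = ∫ x in Set.univ.pi fun _ => Set.Ioc 0 1, ∑' n : ι → ℤ, g (x + fun i => (n i : ℝ)) := by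
        simp only [hperiodic]
    _ = ∑' n : ι → ℤ, ∫ x in Set.univ.pi fun _ => Set.Ioc 0 1, g (x + fun i => (n i : ℝ)) :=
        (integral_tsum_of_summable_integral_norm hint hnorm).symm
    _ = ∫ x, g x := (hasSum_setIntegral_comp_add_intCast hg).tsum_eq

theorem tsum_comp_intCast_eq_tsum_integral_mFourier {f : (ι → ℝ) → ℂ} (hf : Integrable f)
    (hcont : Continuous (periodization f))
    (hsum : Summable fun k : ι → ℤ => ∫ x, mFourier (-k) (torusProj x) * f x) :
    ∑' n : ι → ℤ, f (fun i => n i) =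
      ∑' k : ι → ℤ, ∫ x, mFourier (-k) (torusProj x) * f x := by
  have hfactor : Function.FactorsThrough (periodization f) torusProj := fun x y hxy => by
    obtain ⟨m, rfl⟩ := torusProj_eq_iff.1 hxy
    exact periodization_add_intCast f y m
  let P : C(UnitAddTorus ι, ℂ) :=
    isQuotientMap_torusProj.lift ⟨periodization f, hcont⟩ hfactor
  have hP : ∀ x, P (torusProj x) = periodization f x :=
    DFunLike.congr_fun (isQuotientMap_torusProj.lift_comp ⟨periodization f, hcont⟩ hfactor)
  have hcoeff := funext (mFourierCoeff_eq_integral_of_eq_periodization hf hP)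
  have h := hasSum_mFourier_series_apply_of_summable (f := P) (hcoeff ▸ hsum) (torusProj 0)
  rw [hcoeff] at h
  rw [← periodization_zero_right, ← hP, ← h.tsum_eq]
  simp [mFourier_torusProj _ (0 : ι → ℝ)]

lemma summable_one_add_norm_intCast_pow_inv {N : ℕ} (hN : Fintype.card ι < N) :
    Summable fun n : ι → ℤ => ((1 + ‖fun i => (n i : ℝ)‖) ^ N)⁻¹ := by
  classical
  let b := (Pi.basisFun ℝ ι).restrictScalars ℤ
  let e : (ι → ℤ) ≃ₗ[ℤ] Submodule.span ℤ (Set.range (Pi.basisFun ℝ ι)) := b.equivFun.symm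
  have he : ∀ n, (e n : ι → ℝ) = fun i => (n i : ℝ) := fun n => by
    ext j
    simp [e, b, Module.Basis.equivFun_symm_apply, Pi.single_apply]
  have hrank : Module.finrank ℤ (Submodule.span ℤ (Set.range (Pi.basisFun ℝ ι))) < N := by
    rwa [Module.finrank_eq_card_basis b]
  refine .of_norm_bounded_eventually
    (e.toEquiv.summable_iff.2 (ZLattice.summable_norm_pow_inv _ N hrank)) ?_
  filter_upwards [(Set.finite_singleton (0 : ι → ℤ)).compl_mem_cofinite] with n hn
  have hpos : 0 < ‖e n‖ := norm_pos_iff.2 ((map_ne_zero_iff e e.injective).2 hn)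
  change _ ≤ ‖e n‖⁻¹ ^ N
  rw [norm_inv, norm_pow, Real.norm_of_nonneg (by positivity), ← he, ← Submodule.coe_norm, inv_pow]
  gcongr
  exact le_add_of_nonneg_left zero_le_one

section Decay

variable {V W : Type*} [NormedAddCommGroup V] [NormedSpace ℝ V] [NormedAddCommGroup W]
  [NormedSpace ℝ W]

lemma exists_norm_add_le_mul_one_add_norm_pow_inv (f : 𝓢(V, W)) (N : ℕ) :
    ∃ C, 0 ≤ C ∧ ∀ x y, ‖f (x + y)‖ ≤ C * (1 + ‖x‖) ^ N * ((1 + ‖y‖) ^ N)⁻¹ := by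
  refine ⟨2 ^ N * (Finset.Iic (N, 0)).sup (fun m => SchwartzMap.seminorm ℝ m.1 m.2) f,
    by positivity, fun x y => ?_⟩
  have hdecay := f.one_add_le_sup_seminorm_apply (𝕜 := ℝ) (m := (N, 0)) le_rfl le_rfl (x + y)
  rw [norm_iteratedFDeriv_zero] at hdecay
  have hy : ‖y‖ ≤ ‖x + y‖ + ‖x‖ := by
    simpa using norm_sub_le (x + y) x
  rw [← div_eq_mul_inv, le_div_iff₀ (by positivity)]
  calc ‖f (x + y)‖ * (1 + ‖y‖) ^ N ≤ ‖f (x + y)‖ * ((1 + ‖x + y‖) * (1 + ‖x‖)) ^ N := by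
        gcongr
        nlinarith [norm_nonneg x, norm_nonneg (x + y)]
    _ = (1 + ‖x + y‖) ^ N * ‖f (x + y)‖ * (1 + ‖x‖) ^ N := by rw [mul_pow]; ring
    _ ≤ _ := by gcongr

end Decay

lemma continuous_periodization (f : 𝓢(ι → ℝ, ℂ)) : Continuous (periodization f) := by
  obtain ⟨C, hC₀, hC⟩ := exists_norm_add_le_mul_one_add_norm_pow_inv f (Fintype.card ι + 1)
  refine continuous_iff_continuousAt.2 fun x => ?_
  have hball : ContinuousOn (periodization f) (Metric.ball 0 (‖x‖ + 1)) := by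
    refine continuousOn_tsum (fun n => by fun_prop)
      ((summable_one_add_norm_intCast_pow_inv (Nat.lt_succ_self _)).mul_left
        (C * (1 + (‖x‖ + 1)) ^ (Fintype.card ι + 1))) fun n y hy => (hC y _).trans ?_
    gcongr
    exact (mem_ball_zero_iff.1 hy).le
  exact hball.continuousAt (Metric.isOpen_ball.mem_nhds (by simp))

variable {V : Type*} [NormedAddCommGroup V] [InnerProductSpace ℝ V]

/-- The linear coordinates on `V` attached to an orthonormal basis, on `ι → ℝ` with its sup norm
rather than on `EuclideanSpace ℝ ι`. -/
noncomputable def ofCoords (b : OrthonormalBasis ι ℝ V) : (ι → ℝ) ≃L[ℝ] V :=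
  (PiLp.continuousLinearEquiv 2 ℝ fun _ : ι => ℝ).symm.trans b.repr.symm.toContinuousLinearEquiv

lemma ofCoords_intCast (b : OrthonormalBasis ι ℝ V) (n : ι → ℤ) :
    ofCoords b (fun i => (n i : ℝ)) = ∑ i, n i • b i := by
  simp only [← Int.cast_smul_eq_zsmul ℝ]
  exact (b.sum_repr_symm (WithLp.toLp 2 fun i => (n i : ℝ))).symm

lemma inner_ofCoords (b : OrthonormalBasis ι ℝ V) (x y : ι → ℝ) :
    inner ℝ (ofCoords b x) (ofCoords b y) = ∑ i, y i * x i :=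
  (b.repr.symm.inner_map_map (WithLp.toLp 2 x) (WithLp.toLp 2 y)).trans (PiLp.inner_apply ..)

lemma summable_comp_sum_zsmul (b : OrthonormalBasis ι ℝ V) (f : 𝓢(V, ℂ)) :
    Summable fun n : ι → ℤ => f (∑ i, n i • b i) := by
  simp only [← ofCoords_intCast]
  obtain ⟨C, -, hC⟩ := exists_norm_add_le_mul_one_add_norm_pow_inv
    (SchwartzMap.compCLMOfContinuousLinearEquiv ℝ (ofCoords b) f) (Fintype.card ι + 1)
  refine .of_norm_bounded
    ((summable_one_add_norm_intCast_pow_inv (Nat.lt_succ_self _)).mul_left C) fun n => ?_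
  simpa using hC 0 fun i => (n i : ℝ)

variable [FiniteDimensional ℝ V] [MeasurableSpace V] [BorelSpace V]

lemma measurePreserving_ofCoords (b : OrthonormalBasis ι ℝ V) : MeasurePreserving (ofCoords b) :=
  b.measurePreserving_repr_symm.comp (PiLp.volume_preserving_toLp ι)

lemma fourier_sum_zsmul (b : OrthonormalBasis ι ℝ V) (f : V → ℂ) (k : ι → ℤ) :
    𝓕 f (∑ i, k i • b i) = ∫ x, mFourier (-k) (torusProj x) * f (ofCoords b x) := by
  rw [Real.fourier_eq, ← (measurePreserving_ofCoords b).integral_comp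
    (ofCoords b).toHomeomorph.measurableEmbedding]
  refine integral_congr_ae (.of_forall fun x => ?_)
  simp only [← ofCoords_intCast, inner_ofCoords, mFourier_torusProj, Circle.smul_def, smul_eq_mul,
    Pi.neg_apply, Int.cast_neg, neg_mul, Finset.sum_neg_distrib]

theorem tsum_comp_sum_zsmul_eq_tsum_fourier (b : OrthonormalBasis ι ℝ V) (f : 𝓢(V, ℂ)) :
    ∑' n : ι → ℤ, f (∑ i, n i • b i) = ∑' n : ι → ℤ, 𝓕 f (∑ i, n i • b i) := by
  let g : 𝓢(ι → ℝ, ℂ) := SchwartzMap.compCLMOfContinuousLinearEquiv ℝ (ofCoords b) f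
  have hcoeff (k : ι → ℤ) :
      𝓕 f (∑ i, k i • b i) = ∫ x, mFourier (-k) (torusProj x) * g x :=
    fourier_sum_zsmul b f k
  have hsum := summable_comp_sum_zsmul b (𝓕 f)
  simp only [hcoeff] at hsum ⊢
  simp only [← ofCoords_intCast]
  exact tsum_comp_intCast_eq_tsum_integral_mFourier g.integrable (continuous_periodization g) hsum

end Poisson

section GaussianIntegers

lemma latC_finTwoArrowEquiv (n : Fin 2 → ℤ) :
    latC (finTwoArrowEquiv ℤ n) = ∑ i, n i • Complex.orthonormalBasisOneI i := by
  simp [latC, Fin.sum_univ_two]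

lemma summable_comp_latC (f : 𝓢(ℂ, ℂ)) : Summable fun p => f (latC p) := by
  rw [← (finTwoArrowEquiv ℤ).summable_iff]
  simpa only [Function.comp_def, latC_finTwoArrowEquiv] using
    summable_comp_sum_zsmul Complex.orthonormalBasisOneI f

theorem tsum_comp_latC_eq_tsum_fourier (f : 𝓢(ℂ, ℂ)) :
    ∑' p, f (latC p) = ∑' p, 𝓕 f (latC p) := by
  simp only [← (finTwoArrowEquiv ℤ).tsum_eq, latC_finTwoArrowEquiv]
  exact tsum_comp_sum_zsmul_eq_tsum_fourier Complex.orthonormalBasisOneI f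

end GaussianIntegers

section SumsOverSquaredNorm

lemma normSq_latC (p : ℤ × ℤ) : Complex.normSq (latC p) = ((p.1 ^ 2 + p.2 ^ 2 : ℤ) : ℝ) := by
  rw [latC, Complex.normSq_add_mul_I]
  push_cast
  rfl

lemma tau_zero (l : ℤ) : tau l 0 = 1 := by
  have horigin (p : ℤ × ℤ) : p.1 ^ 2 + p.2 ^ 2 = ((0 : ℕ) : ℤ) ↔ p = 0 := by
    rw [Nat.cast_zero, add_eq_zero_iff_of_nonneg (sq_nonneg _) (sq_nonneg _), sq_eq_zero_iff,
      sq_eq_zero_iff, Prod.ext_iff]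
    rfl
  rw [tau, ← (Equiv.subtypeEquivRight horigin).symm.tsum_eq,
    tsum_eq_single (⟨0, rfl⟩ : {p : ℤ × ℤ // p = 0}) fun q hq => absurd (Subtype.ext q.2) hq]
  simp [latC]

lemma hasSum_tau_mul (l : ℤ) {h : ℝ → ℂ} {S : ℂ}
    (hS : HasSum (fun p => h (‖latC p‖ ^ 2) * angularChar l (latC p)) S) :
    HasSum (fun n : ℕ => tau l n * h n) S := by
  let sqNorm (p : ℤ × ℤ) : ℕ := (p.1 ^ 2 + p.2 ^ 2).toNat
  have hfiber (n : ℕ) (p : ℤ × ℤ) : p ∈ sqNorm ⁻¹' {n} ↔ p.1 ^ 2 + p.2 ^ 2 = (n : ℤ) := by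
    have : 0 ≤ p.1 ^ 2 + p.2 ^ 2 := by positivity
    simp only [sqNorm, Set.mem_preimage, Set.mem_singleton_iff]
    omega
  refine (hS.tsum_fiberwise sqNorm).congr_fun fun n => ?_
  rw [tau, mul_comm, ← tsum_mul_left, ← (Equiv.subtypeEquivRight (hfiber n)).tsum_eq]
  refine tsum_congr fun p => ?_
  rw [Complex.sq_norm, normSq_latC, (hfiber n p).1 p.2]
  rfl

lemma tsum_pnat_tau_mul (l : ℤ) {h : ℝ → ℂ}
    (hs : Summable fun p => h (‖latC p‖ ^ 2) * angularChar l (latC p)) :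
    ∑' p, h (‖latC p‖ ^ 2) * angularChar l (latC p) = h 0 + ∑' n : ℕ+, tau l n * h n := by
  have hsum := hasSum_tau_mul l hs.hasSum
  rw [← hsum.tsum_eq, hsum.summable.tsum_eq_zero_add, tau_zero, one_mul, Nat.cast_zero,
    tsum_pnat_eq_tsum_succ (f := fun n : ℕ => tau l n * h n)]

end SumsOverSquaredNorm

section HankelTransform

lemma besselJNat_zero_right (n : ℕ) : besselJNat n 0 = if n = 0 then 1 else 0 := by
  rw [besselJNat, tsum_eq_single 0 fun m hm => by simp [hm]]
  split_ifs with hn <;> simp [hn]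

lemma besselJ_zero_right (l : ℤ) : besselJ l 0 = if l = 0 then 1 else 0 := by
  obtain ⟨n, rfl | rfl⟩ := l.eq_nat_or_neg
  · simp [besselJ_natCast, besselJNat_zero_right]
  · rcases eq_or_ne n 0 with rfl | hn
    · simp [besselJ, besselJNat_zero_right]
    · simp [besselJ_neg_natCast, besselJNat_zero_right, hn]

lemma hankelB_zero_right (l : ℤ) (F : ℝ → ℂ) :
    hankelB l F 0 = if l = 0 then ∫ r in Set.Ioi 0, F r else 0 := by
  simp only [hankelB, zero_mul, Real.sqrt_zero, mul_zero, besselJ_zero_right]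
  split_ifs <;> simp

lemma hankelB_comp_div (l : ℤ) (F : ℝ → ℂ) {X : ℝ} (hX : 0 < X) (ξ : ℝ) :
    hankelB l (fun y => F (y / X)) ξ = X * hankelB l F (ξ * X) := by
  have h := integral_comp_mul_left_Ioi
    (fun y => F y * (besselJ l (2 * π * √(ξ * X * y)) : ℂ)) 0 (inv_pos.2 hX)
  rw [mul_zero, inv_inv, Complex.real_smul] at h
  rw [hankelB, hankelB, ← h]
  refine setIntegral_congr_fun measurableSet_Ioi fun y _ => ?_
  have hy : ξ * X * (X⁻¹ * y) = ξ * y := by field_simp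
  simp only [hy, div_eq_inv_mul]

end HankelTransform

theorem tsum_tau_mul_eq (F : 𝓢(ℝ, ℂ)) (hF : ∀ x ≤ 0, F x = 0) (l : ℤ) :
    ∑' n : ℕ+, tau l n * F n =
      π * (-Complex.I) ^ l * (hankelB l F 0 + ∑' n : ℕ+, tau l n * hankelB l F n) := by
  let f := radialMulAngularChar F hF l
  have hf (p : ℤ × ℤ) : f (latC p) = F (‖latC p‖ ^ 2) * angularChar l (latC p) :=
    radialMulAngularChar_apply F hF l (latC p)
  have hfourier (p : ℤ × ℤ) : 𝓕 f (latC p) = π * (-Complex.I) ^ l *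
      (hankelB l F (‖latC p‖ ^ 2) * angularChar l (latC p)) := by
    rw [SchwartzMap.fourier_coe, funext (radialMulAngularChar_apply F hF l),
      fourier_comp_norm_sq_mul_angularChar F.integrable.integrableOn, mul_assoc]
  have hsum := summable_comp_latC f
  have hsum' := summable_comp_latC (𝓕 f)
  have hpoisson := tsum_comp_latC_eq_tsum_fourier f
  have hc : (π * (-Complex.I) ^ l : ℂ) ≠ 0 :=
    mul_ne_zero (Complex.ofReal_ne_zero.2 pi_ne_zero)
      (zpow_ne_zero _ (neg_ne_zero.2 Complex.I_ne_zero))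
  simp only [hf, hfourier, tsum_mul_left, summable_mul_left_iff hc] at hsum hsum' hpoisson
  rwa [tsum_pnat_tau_mul l hsum, tsum_pnat_tau_mul l hsum', hF 0 le_rfl, zero_add] at hpoisson

/-- Voronoi-type summation formula. -/
theorem voronoi_summation (F : SchwartzMap ℝ ℂ) (hF : Function.support F ⊆ Set.Ioi 0)
    (l : ℤ) (X : ℝ) (hX : 0 < X) :
    ∑' n : ℕ+, tau (4*l) n * F ((n : ℝ) / X)
      = (if l = 0 then (1:ℂ) else 0) * ((π * X : ℝ) : ℂ) * (∫ r in Set.Ioi (0:ℝ), F r)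
        + ((π * X : ℝ) : ℂ) * ∑' n : ℕ+, tau (4*l) n * hankelB (4*l) F ((n : ℝ) * X) := by
  let G : 𝓢(ℝ, ℂ) := SchwartzMap.compCLMOfContinuousLinearEquiv ℂ
    (ContinuousLinearEquiv.smulLeft (Units.mk0 X⁻¹ (inv_ne_zero hX.ne'))) F
  have hG : ⇑G = fun x => F (x / X) := funext fun x => congrArg F (inv_mul_eq_div X x)
  have hG₀ : ∀ x ≤ 0, G x = 0 := fun x hx => by
    rw [hG]
    exact Function.notMem_support.1 fun h => (hF h).not_ge (div_nonpos_of_nonpos_of_nonneg hx hX.le)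
  have hphase : (-Complex.I) ^ (4 * l) = 1 := by
    rw [zpow_mul, zpow_ofNat, Even.neg_pow (by decide), Complex.I_pow_four, one_zpow]
  have h := tsum_tau_mul_eq G hG₀ (4 * l)
  simp only [hG, hphase, hankelB_comp_div _ _ hX, zero_mul, hankelB_zero_right] at h
  have hl : 4 * l = 0 ↔ l = 0 := by omega
  simp only [hl, mul_left_comm _ (X : ℂ), tsum_mul_left] at h
  rw [h]
  split_ifs <;> push_cast <;> ring
end
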